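/- arXiv:2502.16009 — 2 statements merged into one kernel-verified Lean document; each statement's English description precedes it below -/
import Mathlib

section
/- The number of monic degree-three polynomials over F_q with constant term -1 that have three distinct roots in F_q equals ((q-1)(q-2) - 2((q-1) - gcd(3,q-1)))/6. -/
open Polynomial

theorem cube_card (G : Type*) [CommGroup G] [Fintype G] [DecidableEq G] [IsCyclic G] :
    (Finset.univ.filter (fun b : G => b ^ 3 = 1)).card = Nat.gcd 3 (Fintype.card G) := by
  have := IsCyclic.card_powMonoidHom_ker (G := G) 3
  rw [Nat.card_eq_fintype_card (α := G), Nat.gcd_comm] at this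
  rw [← this, ← Nat.card_eq_finsetCard]
  apply Nat.card_congr
  exact Equiv.subtypeEquivRight (fun x => by simp [MonoidHom.mem_ker])

theorem pairs_card (G : Type*) [CommGroup G] [Fintype G] [DecidableEq G] [IsCyclic G] :
    (Finset.univ.filter (fun z : G × G => z.1 ≠ z.2 ∧ z.1 * z.2 ^ 2 ≠ 1 ∧ z.1 ^ 2 * z.2 ≠ 1)).card
      + 2 * (Fintype.card G - Nat.gcd 3 (Fintype.card G)) =
      Fintype.card G * (Fintype.card G - 1) := by
  set S := (Finset.univ.filter (fun z : G × G => z.1 ≠ z.2 ∧ z.1 * z.2 ^ 2 ≠ 1 ∧ z.1 ^ 2 * z.2 ≠ 1)) with hS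
  set N := (Finset.univ.filter (fun b : G => ¬ b ^ 3 = 1)) with hN
  have hNc : N.card = Fintype.card G - Nat.gcd 3 (Fintype.card G) := by
    have h := Finset.card_filter_add_card_filter_not (s := (Finset.univ : Finset G)) (fun b : G => b ^ 3 = 1)
    rw [cube_card, Finset.card_univ] at h
    exact Nat.eq_sub_of_add_eq' h
  have hA : (N.image (fun b => ((b ^ 2)⁻¹, b))).card = N.card :=
    Finset.card_image_of_injective _ (fun x y h => by simpa using (Prod.ext_iff.1 h).2)
  have hB : (N.image (fun b => (b, (b ^ 2)⁻¹))).card = N.card :=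
    Finset.card_image_of_injective _ (fun x y h => by simpa using (Prod.ext_iff.1 h).1)
  have h1 : ∀ a b : G, a * b ^ 2 = 1 ↔ (b ^ 2)⁻¹ = a := fun a b => by
    rw [mul_eq_one_iff_eq_inv, eq_comm]
  have h2 : ∀ a b : G, a ^ 2 * b = 1 ↔ (a ^ 2)⁻¹ = b := fun a b => by
    rw [mul_comm, h1]
  have h3 : ∀ a : G, (a ^ 2)⁻¹ = a ↔ a ^ 3 = 1 := fun a => by
    rw [← h1, pow_succ' a 2]
  have h4 : ∀ a b : G, a * b ^ 2 = 1 → a ^ 2 * b = 1 → a = b := fun a b h h' => by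
    have : a * (a * b) = b * (a * b) := by
      rw [← mul_assoc, ← sq, h', ← h, mul_left_comm, ← sq]
    exact mul_right_cancel this
  have hO : (Finset.univ : Finset G).offDiag =
      (S ∪ N.image (fun b => ((b ^ 2)⁻¹, b))) ∪ N.image (fun b => (b, (b ^ 2)⁻¹)) := by
    ext ⟨a, b⟩
    simp only [hS, hN, Finset.mem_offDiag, Finset.mem_union, Finset.mem_filter, Finset.mem_univ,
      true_and, Finset.mem_image, Prod.mk.injEq, ← h3]
    constructor
    · intro h
      by_cases ha : a * b ^ 2 = 1
      · left; right; exact ⟨b, by rw [(h1 _ _).1 ha]; exact h, (h1 _ _).1 ha, rfl⟩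
      by_cases hb : a ^ 2 * b = 1
      · right; exact ⟨a, by rw [(h2 _ _).1 hb]; exact fun e => h e.symm, rfl, (h2 _ _).1 hb⟩
      exact Or.inl (Or.inl ⟨h, ha, hb⟩)
    · rintro ((h | ⟨x, h, rfl, rfl⟩) | ⟨x, h, rfl, rfl⟩)
      · exact h.1
      · exact h
      · exact fun e => h e.symm
  have hc := Finset.offDiag_card (Finset.univ : Finset G)
  rw [hO, Finset.card_union_of_disjoint, Finset.card_union_of_disjoint, hA, hB, hNc,
    Finset.card_univ] at hc
  · rw [Nat.mul_sub (Fintype.card G), mul_one, ← hc]; ring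
  · rw [Finset.disjoint_left]
    rintro ⟨a, b⟩ h h'
    simp only [hS, Finset.mem_filter, Finset.mem_image, Prod.mk.injEq] at h h'
    obtain ⟨x, _, hx, rfl⟩ := h'
    exact h.2.2.1 ((h1 _ _).2 hx)
  · rw [Finset.disjoint_left]
    rintro ⟨a, b⟩ h h'
    simp only [hN, Finset.mem_filter, Finset.mem_image, Prod.mk.injEq] at h'
    obtain ⟨x, hx3, rfl, hx⟩ := h'
    simp only [hS, Finset.mem_union, Finset.mem_filter, Finset.mem_image, Prod.mk.injEq] at h
    rcases h with h | ⟨y, _, hy, rfl⟩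
    · exact h.2.2.2 ((h2 _ _).2 hx)
    · have := h4 _ _ ((h1 _ _).2 hy) ((h2 _ _).2 hx)
      subst this
      exact hx3.2 ((h3 _).1 hx)

theorem count_distinct_split_cubics (F : Type*) [Field F] [Fintype F] :
    Nat.card {p : Polynomial F //
        (∃ a b c : F, a ≠ b ∧ b ≠ c ∧ a ≠ c ∧
          p = (X - C a) * (X - C b) * (X - C c)) ∧ p.coeff 0 = -1} =
      ((Fintype.card F - 1) * (Fintype.card F - 2) -
        2 * ((Fintype.card F - 1) - Nat.gcd 3 (Fintype.card F - 1))) / 6 := by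
  classical
  have hG := pairs_card Fˣ
  rw [Fintype.card_units] at hG
  set S := (Finset.univ.filter (fun z : Fˣ × Fˣ => z.1 ≠ z.2 ∧ z.1 * z.2 ^ 2 ≠ 1 ∧ z.1 ^ 2 * z.2 ≠ 1)) with hS
  let f : Fˣ × Fˣ → F[X] := fun z =>
    (X - C (z.1 : F)) * (X - C (z.2 : F)) * (X - C (((z.1 * z.2)⁻¹ : Fˣ) : F))
  have key : ∀ a b : Fˣ, (a, b) ∈ S ↔ a ≠ b ∧ b ≠ (a * b)⁻¹ ∧ a ≠ (a * b)⁻¹ := by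
    intro a b
    simp only [hS, Finset.mem_filter, Finset.mem_univ, true_and, ne_eq, eq_inv_iff_mul_eq_one]
    rw [mul_left_comm, ← sq, ← mul_assoc, ← sq]
  have hP : ∀ p : F[X], ((∃ a b c : F, a ≠ b ∧ b ≠ c ∧ a ≠ c ∧
          p = (X - C a) * (X - C b) * (X - C c)) ∧ p.coeff 0 = -1) ↔ p ∈ S.image f := by
    intro p
    rw [Finset.mem_image]
    constructor
    · rintro ⟨⟨a, b, c, hab, hbc, hac, rfl⟩, h0⟩
      have habc : a * b * c = 1 := by
        simp [coeff_zero_eq_eval_zero] at h0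
        linear_combination h0
      have ha : a ≠ 0 := by rintro rfl; simp at habc
      have hb : b ≠ 0 := by rintro rfl; simp at habc
      have hc : (a * b)⁻¹ = c := by
        rw [inv_eq_iff_eq_inv]; exact eq_inv_of_mul_eq_one_left habc
      have hc' : (((Units.mk0 a ha * Units.mk0 b hb)⁻¹ : Fˣ) : F) = c := by
        rw [← hc]; simp [mul_comm]
      refine ⟨(Units.mk0 a ha, Units.mk0 b hb), (key _ _).2 ?_, ?_⟩
      · simp only [ne_eq, Units.ext_iff, hc']
        exact ⟨hab, hbc, hac⟩
      · simp only [f, hc']; rfl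
    · rintro ⟨⟨a, b⟩, h, rfl⟩
      obtain ⟨h1, h2, h3⟩ := (key _ _).1 h
      refine ⟨⟨a, b, ((a * b)⁻¹ : Fˣ), by simpa [Units.ext_iff] using h1, fun e => h2 (Units.ext e), fun e => h3 (Units.ext e), rfl⟩, ?_⟩
      have hu : (a : F) * b * (((a * b)⁻¹ : Fˣ) : F) = 1 := by
        rw [← Units.val_mul, ← Units.val_mul, mul_inv_cancel, Units.val_one]
      simp only [f, coeff_zero_eq_eval_zero, eval_mul, eval_sub, eval_X, eval_C]
      linear_combination -hu
  have hcard : Nat.card {p : Polynomial F //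
        (∃ a b c : F, a ≠ b ∧ b ≠ c ∧ a ≠ c ∧
          p = (X - C a) * (X - C b) * (X - C c)) ∧ p.coeff 0 = -1} = (S.image f).card := by
    rw [Nat.card_congr (Equiv.subtypeEquivRight hP)]
    exact Nat.card_eq_finsetCard _
  have hroot : ∀ z : Fˣ × Fˣ, ∀ x : Fˣ, (f z).eval (x : F) = 0 ↔ x = z.1 ∨ x = z.2 ∨ x = (z.1 * z.2)⁻¹ := by
    intro z x
    simp only [f, eval_mul, eval_sub, eval_X, eval_C, mul_eq_zero, sub_eq_zero, Units.ext_iff, or_assoc]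
  have h6 : S.card = (S.image f).card * 6 := by
    rw [Finset.card_eq_sum_card_image f S]
    apply Finset.sum_const_nat
    intro p hp
    obtain ⟨⟨a, b⟩, h, rfl⟩ := Finset.mem_image.1 hp
    obtain ⟨h1, h2, h3⟩ := (key _ _).1 h
    have hfib : S.filter (fun z => f z = f (a, b)) = ({a, b, (a * b)⁻¹} : Finset Fˣ).offDiag := by
      ext ⟨x, y⟩
      simp only [Finset.mem_filter, Finset.mem_offDiag, Finset.mem_insert, Finset.mem_singleton]
      constructor
      · rintro ⟨hxy, he⟩
        refine ⟨(hroot (a, b) x).1 ?_, (hroot (a, b) y).1 ?_, ((key _ _).1 hxy).1⟩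
        · rw [← he, hroot]; simp
        · rw [← he, hroot]; simp
      · rintro ⟨hx, hy, hne⟩
        have hca : (a * (a * b)⁻¹)⁻¹ = b := by simp
        have hcb : (b * (a * b)⁻¹)⁻¹ = a := by simp [mul_comm]
        rw [key]
        have hba : (b * a)⁻¹ = (a * b)⁻¹ := by rw [mul_comm]
        have hca' : ((a * b)⁻¹ * a)⁻¹ = b := by rw [mul_comm, hca]
        have hcb' : ((a * b)⁻¹ * b)⁻¹ = a := by rw [mul_comm, hcb]
        rcases hx with hx | hx | hx <;> rcases hy with hy | hy | hy <;> rw [hx, hy] at hne ⊢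
        · exact absurd rfl hne
        · exact ⟨⟨h1, h2, h3⟩, rfl⟩
        · rw [hca]; exact ⟨⟨h3, h2.symm, h1⟩, by simp only [f, hca]; ring⟩
        · rw [hba]; exact ⟨⟨h1.symm, h3, h2⟩, by simp only [f, hba]; ring⟩
        · exact absurd rfl hne
        · rw [hcb]; exact ⟨⟨h2, h3.symm, h1.symm⟩, by simp only [f, hcb]; ring⟩
        · rw [hca']; exact ⟨⟨h3.symm, h1, h2.symm⟩, by simp only [f, hca']; ring⟩
        · rw [hcb']; exact ⟨⟨h2.symm, h1.symm, h3.symm⟩, by simp only [f, hcb']; ring⟩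
        · exact absurd rfl hne
    rw [hfib, Finset.offDiag_card, Finset.card_eq_three.2 ⟨a, b, _, h1, h3, h2, rfl⟩]
  rw [hcard]
  have e : Fintype.card F - 1 - 1 = Fintype.card F - 2 := by omega
  rw [e] at hG
  omega
end

section
/- The number of monic degree-three polynomials over F_q with constant term -1 that have exactly one root in F_q equals (q^2 - q)/2. -/
open Polynomial

theorem card_reducible_pairs (F : Type*) [Field F] [Fintype F] :
    Nat.card {c : F × F // ∃ x : F, x ^ 2 + c.1 * x + c.2 = 0} =
      (Fintype.card F + 1).choose 2 := by
  classical
  rw [← Sym2.card, ← Nat.card_eq_fintype_card]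
  symm
  let g : Sym2 F → F × F := Sym2.lift ⟨fun r s => (-(r + s), r * s), fun r s => by
    simp [add_comm, mul_comm]⟩
  have hg : ∀ r s, g s(r, s) = (-(r + s), r * s) := fun r s => rfl
  have hroot : ∀ z, ∃ x : F, x ^ 2 + (g z).1 * x + (g z).2 = 0 := by
    intro z
    induction z using Sym2.ind with
    | _ r s => exact ⟨r, by rw [hg]; ring⟩
  refine Nat.card_congr (Equiv.ofBijective (fun z => ⟨g z, hroot z⟩) ⟨?_, ?_⟩)
  · intro z w h
    have h2 : g z = g w := congrArg Subtype.val h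
    clear h
    induction z using Sym2.ind with
    | _ r s =>
    induction w using Sym2.ind with
    | _ t u =>
    rw [hg, hg, Prod.mk.injEq] at h2
    obtain ⟨h1, h2⟩ := h2
    have h1 : r + s = t + u := neg_injective h1
    have h3 : (r - t) * (r - u) = 0 := by linear_combination r * h1 - h2
    rw [Sym2.eq_iff]
    rcases mul_eq_zero.mp h3 with h | h
    · left
      exact ⟨by linear_combination h, by linear_combination h1 - h⟩
    · right
      exact ⟨by linear_combination h, by linear_combination h1 - h⟩
  · rintro ⟨⟨a, b⟩, x, hx⟩
    refine ⟨s(x, -a - x), Subtype.ext ?_⟩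
    simp only at hx
    change g s(x, -a - x) = (a, b)
    rw [hg, Prod.mk.injEq]
    exact ⟨by ring, by linear_combination -hx⟩

theorem card_irreducible_pairs (F : Type*) [Field F] [Fintype F] :
    Nat.card {c : F × F // ¬ ∃ x : F, x ^ 2 + c.1 * x + c.2 = 0} =
      (Fintype.card F ^ 2 - Fintype.card F) / 2 := by
  classical
  have h := card_reducible_pairs F
  rw [Nat.card_eq_fintype_card] at h ⊢
  rw [Fintype.card_subtype_compl, h, Fintype.card_prod, Nat.choose_two_right]
  obtain ⟨k, hk⟩ : Even (Fintype.card F * (Fintype.card F + 1)) := Nat.even_mul_succ_self _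
  simp only [Nat.add_sub_cancel]
  have h1 : (Fintype.card F + 1) * Fintype.card F
    = Fintype.card F * Fintype.card F + Fintype.card F := by ring
  have h2 : Fintype.card F * (Fintype.card F + 1)
    = Fintype.card F * Fintype.card F + Fintype.card F := by ring
  rw [h1, pow_two]
  rw [h2] at hk
  have : Fintype.card F ≤ Fintype.card F * Fintype.card F := Nat.le_mul_self _
  omega

/-- The monic quadratic with given coefficients. -/
noncomputable def quadPoly {F : Type*} [Field F] (c : F × F) : F[X] :=
  X ^ 2 + (C c.1 * X + C c.2)

theorem quadPoly_deg {F : Type*} [Field F] (c : F × F) :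
    (C c.1 * X + C c.2 : F[X]).degree < (2 : ℕ) :=
  lt_of_le_of_lt degree_linear_le (by norm_num)

theorem quadPoly_monic {F : Type*} [Field F] (c : F × F) : (quadPoly c).Monic :=
  monic_X_pow_add (quadPoly_deg c)

theorem quadPoly_natDegree {F : Type*} [Field F] (c : F × F) : (quadPoly c).natDegree = 2 :=
  natDegree_eq_of_degree_eq_some (by
    unfold quadPoly
    rw [degree_add_eq_left_of_degree_lt] <;> rw [degree_X_pow]
    exact quadPoly_deg c)

theorem quadPoly_roots {F : Type*} [Field F] (c : F × F) :
    (quadPoly c).roots = 0 ↔ ¬ ∃ x : F, x ^ 2 + c.1 * x + c.2 = 0 := by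
  rw [Multiset.eq_zero_iff_forall_notMem, not_exists]
  refine forall_congr' fun x => not_congr ?_
  rw [mem_roots (quadPoly_monic c).ne_zero]
  simp [quadPoly, IsRoot, add_assoc]

theorem quadPoly_injective {F : Type*} [Field F] :
    Function.Injective (quadPoly : F × F → F[X]) := by
  intro c d h
  have h0 := congrArg (fun p => coeff p 0) h
  have h1 := congrArg (fun p => coeff p 1) h
  simp [quadPoly, coeff_X_pow, coeff_C] at h0 h1
  exact Prod.ext h1 h0

theorem count_exactly_one_root_cubics (F : Type*) [Field F] [Fintype F] :
    Nat.card {p : Polynomial F // p.Monic ∧ p.natDegree = 3 ∧ p.coeff 0 = -1 ∧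
        Multiset.card p.roots = 1} =
      (Fintype.card F ^ 2 - Fintype.card F) / 2 := by
  rw [← card_irreducible_pairs]
  symm
  let f : F × F → F[X] := fun c => quadPoly c * (X - C c.2⁻¹)
  have hmon : ∀ c, (f c).Monic := fun c => (quadPoly_monic c).mul (monic_X_sub_C _)
  have hroots : ∀ c, (¬ ∃ x : F, x ^ 2 + c.1 * x + c.2 = 0) → (f c).roots = {c.2⁻¹} := by
    intro c hc
    rw [roots_mul (hmon c).ne_zero, (quadPoly_roots c).2 hc, roots_X_sub_C, zero_add]
  refine Nat.card_congr (Equiv.ofBijective (fun c => ⟨f c.1, hmon _, ?_, ?_, ?_⟩) ⟨?_, ?_⟩)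
  · rw [(quadPoly_monic _).natDegree_mul (monic_X_sub_C _), quadPoly_natDegree, natDegree_X_sub_C]
  · obtain ⟨⟨a, b⟩, hc⟩ := c
    have hb : b ≠ 0 := fun h => hc ⟨0, by simp [h]⟩
    simp [f, mul_coeff_zero, quadPoly, hb]
  · rw [hroots _ c.2]; simp
  · rintro ⟨c, hc⟩ ⟨d, hd⟩ h
    have h : f c = f d := congrArg Subtype.val h
    have hr : c.2⁻¹ = d.2⁻¹ := by
      have := congrArg roots h
      rw [hroots c hc, hroots d hd] at this
      exact Multiset.singleton_inj.mp this
    refine Subtype.ext (quadPoly_injective ?_)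
    simp only [f, hr] at h
    exact mul_right_cancel₀ (X_sub_C_ne_zero _) h
  · rintro ⟨p, hp, hd, h0, hr⟩
    obtain ⟨r, hr⟩ := Multiset.card_eq_one.mp hr
    have hrr : p.IsRoot r := isRoot_of_mem_roots (by rw [hr]; simp)
    obtain ⟨g, rfl⟩ := dvd_iff_isRoot.mpr hrr
    have hg : g.Monic := (monic_X_sub_C r).of_mul_monic_left hp
    have hgd : g.natDegree = 2 := by
      rw [(monic_X_sub_C r).natDegree_mul hg, natDegree_X_sub_C] at hd
      omega
    have hgq : g = quadPoly (g.coeff 1, g.coeff 0) := by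
      conv_lhs => rw [hg.as_sum, hgd]
      simp [quadPoly, Finset.sum_range_succ, add_comm]
    rw [roots_mul hp.ne_zero, roots_X_sub_C] at hr
    have hg0 : g.roots = 0 := add_eq_left.mp hr
    rw [mul_coeff_zero] at h0
    have h0 : r * g.coeff 0 = 1 := by simpa using h0
    have hrg : (g.coeff 0)⁻¹ = r := (eq_inv_of_mul_eq_one_left h0).symm
    refine ⟨⟨(g.coeff 1, g.coeff 0), (quadPoly_roots _).1 (hgq ▸ hg0)⟩, Subtype.ext ?_⟩
    change quadPoly (g.coeff 1, g.coeff 0) * (X - C (g.coeff 0)⁻¹) = _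
    rw [← hgq, hrg, mul_comm]
end
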